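/- For every β > 0, 0 < c < 1, n ∈ ℕ₀, and s ∈ ℝ, Σ_{x=0}^∞ exp(isx) M_n^{β,c}(x) (1−c)^β c^x (β)_x / x! = (1−c)^β (c^n (β)_n/n!)^{1/2} (1 − c e^{is})^{−β−n} (1 − e^{is})^n, where the complex power (1 − c e^{is})^{−β−n} is taken with the principal branch. -/

import Mathlib

/-!
Put `z = c e^{is}`, so that `‖z‖ = c < 1`. The negative binomial series
`Σ_x (β)_x / x! z^x = (1 - z)^{-β}` (`hasSum_poch`) gives, after the index shift `x = m + k` and
`(-(m+k))_k = (-1)^k (m+k)!/m!`, `(β)_{m+k} = (β)_k (β+k)_m`, the weighted series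
`Σ_x (-x)_k (β)_x / x! z^x = (-1)^k (β)_k z^k (1 - z)^{-β-k}` (`hasSum_poch_neg`).
Since `(-n)_k = (-1)^k k! C(n,k)`, summing the finitely many `k` in the definition of the Meixner
polynomial leaves, up to the constant prefactor,
`(1 - z)^{-β-n} Σ_k C(n,k) (z (1 - c⁻¹))^k (1 - z)^{n-k}`,
and the binomial theorem evaluates the sum as `(1 - z/c)^n = (1 - e^{is})^n`.
-/


/-- The rising factorial `(a)_n = a(a+1)⋯(a+n−1)`. -/
noncomputable def poch (a : ℝ) (n : ℕ) : ℝ := (ascPochhammer ℝ n).eval a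

/-- The normalized Meixner polynomial
`M_n^{β,c}(x) = (c^n (β)_n/n!)^{1/2} Σ_{k=0}^n (−n)_k (−x)_k/((β)_k k!) (1 − c⁻¹)^k`. -/
noncomputable def meixner (β c : ℝ) (n x : ℕ) : ℝ :=
  Real.sqrt (c ^ n * poch β n / Nat.factorial n) *
    ∑ k ∈ Finset.range (n + 1),
      poch (-(n : ℝ)) k * poch (-(x : ℝ)) k / (poch β k * Nat.factorial k) * (1 - c⁻¹) ^ k

/-- `(-x)_k = (-1)^k x (x-1) ⋯ (x-k+1)`; in particular it vanishes for `x < k`. -/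
lemma poch_neg_natCast (x k : ℕ) :
    poch (-(x : ℝ)) k = (-1) ^ k * (x.descFactorial k : ℝ) := by
  rw [poch, ascPochhammer_eval_neg_eq_descPochhammer, descPochhammer_eval_eq_descFactorial]

lemma poch_add (a : ℝ) (k m : ℕ) : poch a (k + m) = poch a k * poch (a + k) m := by
  simp [poch, ← ascPochhammer_mul]

lemma poch_pos {a : ℝ} (ha : 0 < a) (n : ℕ) : 0 < poch a n := ascPochhammer_pos n a ha

/-- The negative binomial series `Σ_x (β)_x / x! z^x = (1 - z)^{-β}`. -/
lemma hasSum_poch (β : ℝ) {z : ℂ} (hz : ‖z‖ < 1) :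
    HasSum (fun x : ℕ => ((poch β x / x.factorial : ℝ) : ℂ) * z ^ x) ((1 - z) ^ (-(β : ℂ))) := by
  have hmem : z ∈ Metric.eball (0 : ℂ) 1 := by
    simpa [Metric.mem_eball, edist_zero_right, enorm_eq_nnnorm, ← NNReal.coe_lt_one] using hz
  have h := (Complex.one_div_one_sub_cpow_hasFPowerSeriesOnBall_zero (β : ℂ)).hasSum hmem
  simp only [zero_add, FormalMultilinearSeries.ofScalars_apply_eq, one_div,
    ← Complex.cpow_neg, smul_eq_mul] at h
  convert! h using 2 with x
  congr 1
  have hx : (x.factorial : ℂ) ≠ 0 := by exact_mod_cast x.factorial_ne_zero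
  have hm := Ring.factorial_nsmul_multichoose_eq_ascPochhammer (β : ℂ) x
  rw [Polynomial.ascPochhammer_smeval_eq_eval, nsmul_eq_mul, Ring.multichoose_eq] at hm
  have hp : ((poch β x : ℝ) : ℂ) = (ascPochhammer ℂ x).eval (β : ℂ) := by
    rw [poch, ← ascPochhammer_map Complex.ofRealHom]
    exact (Polynomial.eval_map_apply (f := Complex.ofRealHom) (p := ascPochhammer ℝ x) β).symm
  rw [Complex.ofReal_div, hp, ← hm, Complex.ofReal_natCast, mul_div_cancel_left₀ _ hx]

/-- The negative binomial series weighted by `(-x)_k`. -/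
lemma hasSum_poch_neg (β : ℝ) (k : ℕ) {z : ℂ} (hz : ‖z‖ < 1) :
    HasSum (fun x : ℕ => ((poch (-(x : ℝ)) k * (poch β x / x.factorial) : ℝ) : ℂ) * z ^ x)
      ((-1) ^ k * poch β k * z ^ k * (1 - z) ^ (-(β : ℂ) - k)) := by
  -- Only the terms `x = m + k` contribute, since `(-x)_k = 0` for `x < k`.
  rw [← (add_left_injective k).hasSum_iff]
  · have h := (hasSum_poch (β + k) hz).mul_left ((-1) ^ k * poch β k * z ^ k : ℂ)
    have he : -((β + k : ℝ) : ℂ) = -(β : ℂ) - k := by push_cast; ring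
    rw [he] at h
    convert! h using 2 with m
    have hf : (m.factorial : ℝ) * ((m + k).descFactorial k : ℝ) = ((m + k).factorial : ℝ) := by
      have := Nat.factorial_mul_descFactorial (Nat.le_add_left k m)
      rw [Nat.add_sub_cancel] at this
      exact_mod_cast this
    have hm : (m.factorial : ℝ) ≠ 0 := by positivity
    have hd : ((m + k).descFactorial k : ℝ) ≠ 0 := by
      intro h0
      rw [h0, mul_zero] at hf
      exact (Nat.factorial_ne_zero (m + k)) (by exact_mod_cast hf.symm)
    have hr : poch (-((m + k : ℕ) : ℝ)) k * (poch β (m + k) / (m + k).factorial) =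
        (-1) ^ k * poch β k * (poch (β + k) m / m.factorial) := by
      rw [poch_neg_natCast, add_comm m k, poch_add, add_comm k m, ← hf]
      field_simp
    simp only [Function.comp_apply]
    rw [hr, pow_add]
    push_cast
    ring
  · intro x hx
    have hxk : x < k := by
      by_contra! hle
      exact hx ⟨x - k, Nat.sub_add_cancel hle⟩
    rw [poch_neg_natCast, Nat.descFactorial_of_lt hxk]
    simp

/-- **Fourier transform of Meixner polynomials against the negative binomial distribution**:
for `β > 0`, `0 < c < 1`,
`Σ_{x=0}^∞ exp(isx) M_n^{β,c}(x) (1−c)^β c^x (β)_x/x!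
 = (1−c)^β (c^n (β)_n/n!)^{1/2} (1 − c e^{is})^{−β−n} (1 − e^{is})^n` (principal branch). -/
theorem fourier_meixner (β c : ℝ) (hβ : 0 < β) (hc : c ∈ Set.Ioo (0 : ℝ) 1) (n : ℕ) (s : ℝ) :
    ∑' x : ℕ, Complex.exp (Complex.I * (s * x)) *
      ((meixner β c n x * ((1 - c) ^ β * c ^ x * poch β x / Nat.factorial x) : ℝ) : ℂ) =
    (((1 - c) ^ β * Real.sqrt (c ^ n * poch β n / Nat.factorial n) : ℝ) : ℂ) *
      (1 - (c : ℂ) * Complex.exp (Complex.I * s)) ^ (-(β : ℂ) - n) *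
      (1 - Complex.exp (Complex.I * s)) ^ n := by
  obtain ⟨hc0, hc1⟩ := hc
  set w : ℂ := Complex.exp (Complex.I * s) with hw
  have hwn : ‖w‖ = 1 := by rw [hw, mul_comm, Complex.norm_exp_ofReal_mul_I]
  have hz : ‖(c : ℂ) * w‖ < 1 := by
    rw [norm_mul, hwn, mul_one, Complex.norm_real, Real.norm_of_nonneg hc0.le]
    exact hc1
  have hz1 : 1 - (c : ℂ) * w ≠ 0 := by
    intro h0
    rw [← sub_eq_zero.mp h0, norm_one] at hz
    exact lt_irrefl _ hz
  have hcc : (c : ℂ) ≠ 0 := by exact_mod_cast hc0.ne'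
  have key := (hasSum_sum (s := Finset.range (n + 1)) fun k _ =>
    (hasSum_poch_neg β k hz).mul_left
      ((poch (-(n : ℝ)) k / (poch β k * k.factorial) * (1 - c⁻¹) ^ k : ℝ) : ℂ)).mul_left
    (((1 - c) ^ β * Real.sqrt (c ^ n * poch β n / Nat.factorial n) : ℝ) : ℂ)
  convert! key.tsum_eq using 1
  · refine tsum_congr fun x => ?_
    have he : Complex.exp (Complex.I * (s * x)) = w ^ x := by
      rw [hw, ← Complex.exp_nat_mul]
      congr 1
      ring
    rw [he, meixner]
    push_cast
    simp only [Finset.mul_sum, Finset.sum_mul]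
    refine Finset.sum_congr rfl fun k _ => ?_
    rw [mul_pow]
    ring
  · rw [mul_assoc]
    congr 1
    -- `1 - e^{is} = z (1 - c⁻¹) + (1 - z)` with `z = c e^{is}`.
    have hb : 1 - w = (c : ℂ) * w * (1 - (c : ℂ)⁻¹) + (1 - (c : ℂ) * w) := by
      field_simp
      ring
    rw [hb, add_pow, Finset.mul_sum]
    refine Finset.sum_congr rfl fun k hk => ?_
    have hkn : k ≤ n := Nat.lt_succ_iff.mp (Finset.mem_range.mp hk)
    have hp : (1 - (c : ℂ) * w) ^ (-(β : ℂ) - k) =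
        (1 - (c : ℂ) * w) ^ (-(β : ℂ) - n) * (1 - (c : ℂ) * w) ^ (n - k) := by
      rw [← Complex.cpow_natCast, ← Complex.cpow_add _ _ hz1, Nat.cast_sub hkn]
      congr 1
      ring
    have hβk : (poch β k : ℂ) ≠ 0 := by exact_mod_cast (poch_pos hβ k).ne'
    have hkf : (k.factorial : ℂ) ≠ 0 := by exact_mod_cast k.factorial_ne_zero
    have hs : ((-1 : ℂ) ^ k) * (-1) ^ k = 1 := by rw [← mul_pow]; simp
    rw [hp, poch_neg_natCast, Nat.descFactorial_eq_factorial_mul_choose]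
    push_cast
    rw [mul_pow _ (1 - (c : ℂ)⁻¹)]
    generalize (1 - (c : ℂ) * w) ^ (-(β : ℂ) - n) = P
    generalize (1 - (c : ℂ) * w) ^ (n - k) = Q
    generalize (1 - (c : ℂ)⁻¹) ^ k = R
    generalize ((c : ℂ) * w) ^ k = S
    field_simp
    linear_combination (-(P * R * S * Q * (n.choose k : ℂ))) * hs
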